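/- Let r ≥ 1 and let W ⊆ ℕ^4 be an A_r(4)-regular staircase. Then an exponent vector K ∈ ℕ^4 does NOT belong to W if and only if either K_s ≥ 1 for all s ∈ {1,2,3,4}, or there exists a nonempty proper subset S ⊊ {1,2,3,4} with K_s ≥ l_S for all s ∈ S. (Equivalently, the monomial ideal with complement W is generated by Z_i^{l_{{i}}}, (Z_iZ_j)^{l_{{i,j}}}, (Z_iZ_jZ_k)^{l_{{i,j,k}}}, and Z_1Z_2Z_3Z_4.) -/

import Mathlib

/-!
The key point is that a minimal exponent vector `J` outside the staircase is a constant multiple of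
the indicator of its support `S`. Let `P ∈ W` be the representative of the class of `J`. If `J` and
`P` were both positive at some `s`, then `J - e_s` and `P - e_s` would be congruent elements of `W`,
hence equal, giving `J = P ∈ W`. So `P` vanishes on `S`, and `J - P ≡ c·(1,1,1,1)` says that all
`J s`, `s ∈ S`, are congruent to `c` modulo `r + 1`. Moreover `(r+1)·e_s ∉ W`, being congruent to
`0 ∈ W`; by minimality either `J = (r+1)·e_s`, or every entry of `J` is below `r + 1`, and then
congruent entries are equal.

Any `K ∉ W` lies above such a `J`; if `K` has a zero entry then `S` is proper and `l S ≤ K` on `S`.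
-/

/-- The reduction map sending an exponent vector `K ∈ ℕ^4` to its class in the group
`(ℤ/(r+1))^4 / ⟨(1,1,1,1)⟩` of order `(r+1)^3`. -/
noncomputable def qmapAr (r : ℕ) (K : Fin 4 → ℕ) :
    (Fin 4 → ZMod (r + 1)) ⧸
      Submodule.span (ZMod (r + 1)) ({fun _ => 1} : Set (Fin 4 → ZMod (r + 1))) :=
  Submodule.Quotient.mk (fun s => (K s : ZMod (r + 1)))

/-- `W ⊆ ℕ^4` is an `A_r(4)`-regular staircase: downward closed, and mapping bijectively
onto `(ℤ/(r+1))^4/⟨(1,1,1,1)⟩` under reduction mod `r+1`. -/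
def IsArRegularStaircase (r : ℕ) (W : Finset (Fin 4 → ℕ)) : Prop :=
  (∀ K ∈ W, ∀ K' : Fin 4 → ℕ, (∀ s, K' s ≤ K s) → K' ∈ W)
  ∧ Set.BijOn (qmapAr r) ↑W Set.univ

lemma qmapAr_eq_iff {r : ℕ} {K L : Fin 4 → ℕ} :
    qmapAr r K = qmapAr r L ↔
      ∃ c : ZMod (r + 1), ∀ s, (K s : ZMod (r + 1)) = c + L s := by
  unfold qmapAr
  rw [Submodule.Quotient.eq, Submodule.mem_span_singleton]
  refine exists_congr fun c => ?_
  rw [funext_iff]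
  refine forall_congr' fun s => ?_
  simp only [Pi.smul_apply, Pi.sub_apply, smul_eq_mul, mul_one]
  rw [eq_sub_iff_add_eq, eq_comm]

lemma IsArRegularStaircase.eq_of_qmapAr_eq {r : ℕ} {W : Finset (Fin 4 → ℕ)}
    (hW : IsArRegularStaircase r W) {K L : Fin 4 → ℕ} (hK : K ∈ W) (hL : L ∈ W)
    (h : qmapAr r K = qmapAr r L) : K = L :=
  hW.2.injOn hK hL h

lemma IsArRegularStaircase.zero_mem {r : ℕ} {W : Finset (Fin 4 → ℕ)}
    (hW : IsArRegularStaircase r W) : (0 : Fin 4 → ℕ) ∈ W := by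
  obtain ⟨K, hK, -⟩ := hW.2.surjOn (Set.mem_univ (qmapAr r 0))
  exact hW.1 K hK 0 fun s => Nat.zero_le _

lemma IsArRegularStaircase.one_notMem {r : ℕ} {W : Finset (Fin 4 → ℕ)}
    (hW : IsArRegularStaircase r W) : (1 : Fin 4 → ℕ) ∉ W := by
  intro h
  have := hW.eq_of_qmapAr_eq h hW.zero_mem (qmapAr_eq_iff.2 ⟨1, fun s => by simp⟩)
  simpa using congrFun this 0

lemma IsArRegularStaircase.single_notMem {r : ℕ} {W : Finset (Fin 4 → ℕ)}
    (hW : IsArRegularStaircase r W) (s : Fin 4) : Pi.single s (r + 1) ∉ W := by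
  intro h
  have := hW.eq_of_qmapAr_eq h hW.zero_mem (qmapAr_eq_iff.2 ⟨0, fun t => by
    rcases eq_or_ne t s with rfl | hts
    · simp only [Pi.single_eq_same, ZMod.natCast_self, Pi.zero_apply, Nat.cast_zero, add_zero]
    · simp [hts]⟩)
  simpa using congrFun this s

/-- A minimal vector outside the staircase shares no support with the element of the staircase
congruent to it. -/
lemma IsArRegularStaircase.eq_zero_of_minimal {r : ℕ} {W : Finset (Fin 4 → ℕ)}
    (hW : IsArRegularStaircase r W) {J P : Fin 4 → ℕ} (hJ : Minimal (· ∉ W) J) (hP : P ∈ W)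
    (h : qmapAr r J = qmapAr r P) {s : Fin 4} (hs : J s ≠ 0) : P s = 0 := by
  by_contra hPs
  have hlt : J - Pi.single s 1 < J := by
    refine lt_of_le_of_ne tsub_le_self fun h => ?_
    have := congrFun h s
    simp only [Pi.sub_apply, Pi.single_eq_same] at this
    omega
  have hJ' : J - Pi.single s 1 ∈ W := not_not.1 (hJ.not_prop_of_lt hlt)
  have hP' : P - Pi.single s 1 ∈ W := hW.1 P hP _ fun t => Nat.sub_le _ _
  have hcast : ∀ L : Fin 4 → ℕ, L s ≠ 0 → ∀ t,
      (((L - Pi.single s 1 : Fin 4 → ℕ) t : ℕ) : ZMod (r + 1)) = L t - (Pi.single s 1 : Fin 4 → ℕ) t := by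
    intro L hL t
    rw [Pi.sub_apply, Nat.cast_sub]
    rcases eq_or_ne t s with rfl | hts
    · simpa using Nat.one_le_iff_ne_zero.2 hL
    · simp [hts]
  obtain ⟨c, hc⟩ := qmapAr_eq_iff.1 h
  have heq := hW.eq_of_qmapAr_eq hJ' hP' (qmapAr_eq_iff.2 ⟨c, fun t => by
    rw [hcast J hs, hcast P hPs, hc t]; ring⟩)
  refine hJ.prop ?_
  have : J = P := by
    funext t
    have := congrFun heq t
    simp only [Pi.sub_apply] at this
    rcases eq_or_ne t s with rfl | hts
    · simp only [Pi.single_eq_same] at this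
      omega
    · simpa [hts] using this
  rwa [this]

/-- The minimal vectors outside the staircase are multiples of indicators of their supports. -/
lemma IsArRegularStaircase.eq_of_minimal {r : ℕ} {W : Finset (Fin 4 → ℕ)}
    (hW : IsArRegularStaircase r W) {J : Fin 4 → ℕ} (hJ : Minimal (· ∉ W) J) {s t : Fin 4}
    (hs : J s ≠ 0) (ht : J t ≠ 0) : J s = J t := by
  by_cases hbig : ∃ u, r + 1 ≤ J u
  · obtain ⟨u, hu⟩ := hbig
    have hle : (Pi.single u (r + 1) : Fin 4 → ℕ) ≤ J := by
      intro t
      rcases eq_or_ne t u with rfl | htu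
      · simpa using hu
      · simp [htu]
    have heq : J = Pi.single u (r + 1) := (hJ.eq_of_le (hW.single_notMem u) hle).symm
    have hsupp : ∀ v, J v ≠ 0 → v = u := by
      intro v hv
      by_contra hvu
      exact hv (by rw [heq]; simp [hvu])
    rw [hsupp s hs, hsupp t ht]
  · push Not at hbig
    obtain ⟨P, hP, hJP⟩ := hW.2.surjOn (Set.mem_univ (qmapAr r J))
    obtain ⟨c, hc⟩ := qmapAr_eq_iff.1 hJP.symm
    have hcong : ∀ v, J v ≠ 0 → (J v : ZMod (r + 1)) = c := by
      intro v hv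
      rw [hc v, hW.eq_zero_of_minimal hJ hP hJP.symm hv]
      simp
    have := (hcong s hs).trans (hcong t ht).symm
    rw [ZMod.natCast_eq_natCast_iff] at this
    exact this.eq_of_lt_of_lt (hbig s) (hbig t)

/-- For an `A_r(4)`-regular staircase `W` with staircase heights `l S`, an exponent
vector `K` is outside `W` iff all its entries are positive, or there is a nonempty
proper subset `S ⊊ {1,2,3,4}` with `K_s ≥ l S` for all `s ∈ S`.  (Equivalently, the
monomial ideal complementary to `W` is generated by `Z_i^{l{i}}`, `(Z_iZ_j)^{l{i,j}}`,
`(Z_iZ_jZ_k)^{l{i,j,k}}` and `Z_1Z_2Z_3Z_4`.) -/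
theorem Ar4_staircase_complement (r : ℕ) (hr : 1 ≤ r) (W : Finset (Fin 4 → ℕ))
    (hW : IsArRegularStaircase r W) (l : Finset (Fin 4) → ℕ)
    (hl : ∀ S : Finset (Fin 4), S.Nonempty →
      IsLeast {m : ℕ | 0 < m ∧ (fun t => if t ∈ S then m else 0) ∉ W} (l S)) :
    ∀ K : Fin 4 → ℕ, K ∉ W ↔
      (∀ s, 1 ≤ K s) ∨
        ∃ S : Finset (Fin 4), S.Nonempty ∧ S ⊂ Finset.univ ∧ ∀ s ∈ S, l S ≤ K s := by
  intro K
  constructor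
  · intro hK
    refine or_iff_not_imp_left.2 fun hpos => ?_
    push Not at hpos
    obtain ⟨z, hz⟩ := hpos
    obtain ⟨J, hJK, hJ⟩ := exists_minimal_le_of_wellFoundedLT (· ∉ W) K hK
    have hne : J ≠ 0 := fun h => hJ.prop (h ▸ hW.zero_mem)
    obtain ⟨u, hu⟩ := Function.ne_iff.1 hne
    have hJind : (fun t => if t ∈ Finset.univ.filter (J · ≠ 0) then J u else 0) = J := by
      funext t
      by_cases ht : J t = 0
      · simp [ht]
      · simpa [ht] using hW.eq_of_minimal hJ hu ht
    have hS : (Finset.univ.filter (J · ≠ 0)).Nonempty := ⟨u, by simpa using hu⟩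
    refine ⟨Finset.univ.filter (J · ≠ 0), hS, ?_, fun s hs => ?_⟩
    · rw [Finset.ssubset_univ_iff]
      intro h
      have hz' : J z ≠ 0 := (Finset.mem_filter.1 (h.ge (Finset.mem_univ z))).2
      have : J z ≤ K z := hJK z
      omega
    · have hmin : l (Finset.univ.filter (J · ≠ 0)) ≤ J u :=
        (hl _ hS).2 ⟨Nat.pos_of_ne_zero hu, by rw [hJind]; exact hJ.prop⟩
      simp only [Finset.mem_filter, Finset.mem_univ, true_and] at hs
      exact (hmin.trans_eq (hW.eq_of_minimal hJ hu hs)).trans (hJK s)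
  · rintro (hpos | ⟨S, hS, -, hSK⟩) hK
    · exact hW.one_notMem (hW.1 K hK 1 hpos)
    · refine (hl S hS).1.2 (hW.1 K hK _ fun s => ?_)
      by_cases hs : s ∈ S
      · simpa [hs] using hSK s hs
      · simp [hs]
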